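/- Let S = (s_1,…,s_m) be m i.i.d. samples from μ and let Z = SD⁻(F,S) = sup_{f∈F} { E_μ[f] − (1/m) Σ_{i=1}^m f(s_i) }. Then for every ε > 0, Pr_S( Z ≥ E_S[Z] + ε ) ≤ exp( − m ε² / ( 2 c ( E_S[Z] + γ_F + ε/3 ) ) ). Consequently, for every δ ∈ (0,1), with probability at least 1 − δ over S, Z ≤ E_S[Z] + sqrt( ( c ln(1/δ)/(3m) )² + 2 c ln(1/δ) ( E_S[Z] + γ_F ) / m ) + c ln(1/δ)/(3m). -/

import Mathlib

/-!
The random variable `g(S) = (m / c) (SD⁻(F, S) + γ_F)` can be written as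
`sup_f (∑ i, (b - f(s_i)) / c + e_f)`, with summands in `[0, 1]` and deterministic offsets
`e_f = (m / c) (E f - inf_F E) ≥ 0`. Deleting the `i`-th summand changes the supremum by an amount
in `[0, 1]`, and these changes add up to at most `g`: the function `g` is self-bounding.

Self-bounding functions concentrate by the entropy method. Integrating out one coordinate after the
other, each at a cost controlled by `1 + z ≤ exp z`, bounds the entropy of `exp (t g)` by a sum over
the coordinates; the self-bounding property then turns this bound into the differential inequality
`(1 - exp (-t)) L'(t) ≤ L(t)` for `L = log E[exp (t g)]`. Hence `L(t) / (exp t - 1)` is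
nonincreasing, so `L(t) ≤ (exp t - 1) E[g]`, as for a Poisson variable of mean `E[g]`, and
Chernoff's bound yields the Bernstein tail. The second claim is the first at the `ε` for which the
bound equals `δ`, the positive root of a quadratic equation.
-/

open MeasureTheory

noncomputable section

/-- Map a Boolean to a `±1` sign: `true ↦ 1`, `false ↦ -1`. -/
def sgnB (x : Bool) : ℝ := if x then 1 else -1

/-- The `n`-Monte-Carlo Empirical Rademacher Average
`R̂ⁿ_m(F,S,σ) = (1/n) Σ_j sup_{f∈F} (1/m) Σ_i σ_{j,i} f(s_i)`. -/
def mcera {X ι : Type*} (f : ι → X → ℝ) (n m : ℕ) (S : Fin m → X)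
    (σ : Fin n → Fin m → Bool) : ℝ :=
  (n : ℝ)⁻¹ * ∑ j : Fin n, ⨆ l : ι, (m : ℝ)⁻¹ * ∑ k : Fin m, sgnB (σ j k) * f l (S k)

/-- Uniform measure on `n × m` sign matrices: the entries are independent
uniform Rademacher (±1) random variables. -/
def radMeasure (n m : ℕ) : Measure (Fin n → Fin m → Bool) :=
  (PMF.uniformOfFintype (Fin n → Fin m → Bool)).toMeasure

/-- The Empirical Rademacher Average `R̂(F,S) = E_σ[R̂ⁿ_m(F,S,σ)]`. -/
def era {X ι : Type*} (f : ι → X → ℝ) (n m : ℕ) (S : Fin m → X) : ℝ :=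
  ∫ σ, mcera f n m S σ ∂(radMeasure n m)

/-- The Rademacher Complexity `R(F,m) = E_S[R̂(F,S)]`, `S` being `m` i.i.d. samples. -/
def rc {X ι : Type*} [MeasurableSpace X] (f : ι → X → ℝ) (n m : ℕ) (μ : Measure X) : ℝ :=
  ∫ S : Fin m → X, era f n m S ∂(Measure.pi fun _ : Fin m => μ)

/-- `ẑ(S) = sup_{f∈F, 1≤i≤m} |f(s_i)|`. -/
def zhat {X ι : Type*} (f : ι → X → ℝ) {m : ℕ} (S : Fin m → X) : ℝ :=
  ⨆ p : ι × Fin m, |f p.1 (S p.2)|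

/-- `ν̂_F(S) = (1/m) sup_{f∈F} Σ_i |f(s_i)|`. -/
def nuhat {X ι : Type*} (f : ι → X → ℝ) {m : ℕ} (S : Fin m → X) : ℝ :=
  (m : ℝ)⁻¹ * ⨆ l : ι, ∑ k : Fin m, |f l (S k)|

/-- The empirical wimpy variance `σ̂²_F(S) = (1/m) sup_{f∈F} Σ_i f(s_i)²`. -/
def sigma2hat {X ι : Type*} (f : ι → X → ℝ) {m : ℕ} (S : Fin m → X) : ℝ :=
  (m : ℝ)⁻¹ * ⨆ l : ι, ∑ k : Fin m, (f l (S k)) ^ 2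

/-- The wimpy variance `σ²_F = sup_{f∈F} E_μ[f²]`. -/
def wimpyVar {X ι : Type*} [MeasurableSpace X] (f : ι → X → ℝ) (μ : Measure X) : ℝ :=
  ⨆ l : ι, ∫ x, (f l x) ^ 2 ∂μ

/-- The positive supremum deviation `SD⁺(F,S) = sup_{f∈F} ((1/m)Σ_i f(s_i) - E_μ[f])`. -/
def sdPlus {X ι : Type*} [MeasurableSpace X] (f : ι → X → ℝ) (μ : Measure X)
    {m : ℕ} (S : Fin m → X) : ℝ :=
  ⨆ l : ι, ((m : ℝ)⁻¹ * ∑ k : Fin m, f l (S k) - ∫ x, f l x ∂μ)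

/-- The negative supremum deviation `SD⁻(F,S) = sup_{f∈F} (E_μ[f] - (1/m)Σ_i f(s_i))`. -/
def sdMinus {X ι : Type*} [MeasurableSpace X] (f : ι → X → ℝ) (μ : Measure X)
    {m : ℕ} (S : Fin m → X) : ℝ :=
  ⨆ l : ι, ((∫ x, f l x ∂μ) - (m : ℝ)⁻¹ * ∑ k : Fin m, f l (S k))

/-- `η_F = sup_{f∈F} E_μ[f] - a`. -/
def etaF {X ι : Type*} [MeasurableSpace X] (f : ι → X → ℝ) (μ : Measure X) (a : ℝ) : ℝ :=
  (⨆ l : ι, ∫ x, f l x ∂μ) - a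

/-- `γ_F = b - inf_{f∈F} E_μ[f]`. -/
def gammaF {X ι : Type*} [MeasurableSpace X] (f : ι → X → ℝ) (μ : Measure X) (b : ℝ) : ℝ :=
  b - ⨅ l : ι, ∫ x, f l x ∂μ

/-- `η̂_F(S) = sup_{f∈F} (1/m) Σ_i f(s_i) - a`. -/
def etahat {X ι : Type*} (f : ι → X → ℝ) {m : ℕ} (S : Fin m → X) (a : ℝ) : ℝ :=
  (⨆ l : ι, (m : ℝ)⁻¹ * ∑ k : Fin m, f l (S k)) - a

/-- `γ̂_F(S) = b - sup_{f∈F} (1/m) Σ_i f(s_i)`. -/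
def gammahat {X ι : Type*} (f : ι → X → ℝ) {m : ℕ} (S : Fin m → X) (b : ℝ) : ℝ :=
  b - ⨆ l : ι, (m : ℝ)⁻¹ * ∑ k : Fin m, f l (S k)

/-- `h(x) = (1+x) ln(1+x) - x`. -/
def hfun (x : ℝ) : ℝ := (1 + x) * Real.log (1 + x) - x

/-- `g(σ) = n m R̂ⁿ_m(F,S,σ) = Σ_j sup_{f∈F} Σ_i σ_{j,i} f(s_i)`. -/
def gup {X ι : Type*} (f : ι → X → ℝ) {n m : ℕ} (S : Fin m → X)
    (σ : Fin n → Fin m → Bool) : ℝ :=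
  ∑ j : Fin n, ⨆ l : ι, ∑ k : Fin m, sgnB (σ j k) * f l (S k)

/-- `g_{j,i}(σ)`: infimum over `σ'_{j,i} ∈ {-1,1}` of `g` evaluated at `σ` with its
`(j,i)` entry replaced by `σ'_{j,i}`. -/
def gji {X ι : Type*} (f : ι → X → ℝ) {n m : ℕ} (S : Fin m → X)
    (σ : Fin n → Fin m → Bool) (j : Fin n) (i : Fin m) : ℝ :=
  min (gup f S (Function.update σ j (Function.update (σ j) i true)))
      (gup f S (Function.update σ j (Function.update (σ j) i false)))

/-- `g(S) = m SD⁺(F,S) = sup_{f∈F} (Σ_i f(s_i) - m E_μ[f])`. -/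
def gSDp {X ι : Type*} [MeasurableSpace X] (f : ι → X → ℝ) (μ : Measure X)
    {m : ℕ} (S : Fin m → X) : ℝ :=
  ⨆ l : ι, (∑ k : Fin m, f l (S k) - m * ∫ x, f l x ∂μ)

/-- `g_i(S) = inf_{s'_i ∈ X} g(s_1,…,s_{i-1},s'_i,s_{i+1},…,s_m)` for `g = m SD⁺`. -/
def gSDpi {X ι : Type*} [MeasurableSpace X] (f : ι → X → ℝ) (μ : Measure X)
    {m : ℕ} (S : Fin m → X) (i : Fin m) : ℝ :=
  ⨅ s' : X, gSDp f μ (Function.update S i s')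

/-- `g(S) = m SD⁻(F,S) = sup_{f∈F} (m E_μ[f] - Σ_i f(s_i))`. -/
def gSDm {X ι : Type*} [MeasurableSpace X] (f : ι → X → ℝ) (μ : Measure X)
    {m : ℕ} (S : Fin m → X) : ℝ :=
  ⨆ l : ι, ((m : ℝ) * (∫ x, f l x ∂μ) - ∑ k : Fin m, f l (S k))

/-- `g_i(S) = inf_{s'_i ∈ X} g(s_1,…,s_{i-1},s'_i,s_{i+1},…,s_m)` for `g = m SD⁻`. -/
def gSDmi {X ι : Type*} [MeasurableSpace X] (f : ι → X → ℝ) (μ : Measure X)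
    {m : ℕ} (S : Fin m → X) (i : Fin m) : ℝ :=
  ⨅ s' : X, gSDm f μ (Function.update S i s')

/-- `g(S) = m σ̂²_F(S) = sup_{f∈F} Σ_i f(s_i)²`. -/
def gWv {X ι : Type*} (f : ι → X → ℝ) {m : ℕ} (S : Fin m → X) : ℝ :=
  ⨆ l : ι, ∑ k : Fin m, (f l (S k)) ^ 2

/-- `g_j(S) = sup_{f∈F} Σ_{i≠j} f(s_i)²`. -/
def gWvj {X ι : Type*} (f : ι → X → ℝ) {m : ℕ} (S : Fin m → X) (j : Fin m) : ℝ :=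
  ⨆ l : ι, ∑ k ∈ Finset.univ.erase j, (f l (S k)) ^ 2


/-! ### Bounded measurable functions -/

/-- Bounded measurable real functions, the class to which the entropy method is applied here: it is
closed under the operations used, and its members are integrable for every finite measure. -/
structure BddMeas {α : Type*} [MeasurableSpace α] (g : α → ℝ) : Prop where
  measurable : Measurable g
  exists_bound : ∃ K : ℝ, ∀ x, |g x| ≤ K

namespace BddMeas

variable {α β : Type*} [MeasurableSpace α] [MeasurableSpace β] {g h : α → ℝ}

lemma const (c : ℝ) : BddMeas fun _ : α => c :=
  ⟨measurable_const, |c|, fun _ => le_rfl⟩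

lemma of_mem_Icc {a b : ℝ} (hg : Measurable g) (hab : ∀ x, g x ∈ Set.Icc a b) : BddMeas g :=
  ⟨hg, max |a| |b|, fun x => abs_le_max_abs_abs (hab x).1 (hab x).2⟩

lemma integrable (hg : BddMeas g) (μ : Measure α) [IsFiniteMeasure μ] : Integrable g μ := by
  obtain ⟨hm, K, hK⟩ := hg
  exact Integrable.of_bound hm.aestronglyMeasurable K (.of_forall hK)

lemma add (hg : BddMeas g) (hh : BddMeas h) : BddMeas fun x => g x + h x := by
  obtain ⟨hm, K, hK⟩ := hg
  obtain ⟨hm', K', hK'⟩ := hh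
  exact ⟨hm.add hm', K + K', fun x => (abs_add_le _ _).trans (add_le_add (hK x) (hK' x))⟩

lemma mul (hg : BddMeas g) (hh : BddMeas h) : BddMeas fun x => g x * h x := by
  obtain ⟨hm, K, hK⟩ := hg
  obtain ⟨hm', K', hK'⟩ := hh
  refine ⟨hm.mul hm', K * K', fun x => ?_⟩
  rw [abs_mul]
  exact mul_le_mul (hK x) (hK' x) (abs_nonneg _) ((abs_nonneg _).trans (hK x))

lemma const_mul (hg : BddMeas g) (c : ℝ) : BddMeas fun x => c * g x :=
  (const c).mul hg

lemma sub (hg : BddMeas g) (hh : BddMeas h) : BddMeas fun x => g x - h x := by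
  simpa [sub_eq_add_neg] using hg.add (hh.const_mul (-1))

lemma exp (hg : BddMeas g) : BddMeas fun x => Real.exp (g x) := by
  obtain ⟨hm, K, hK⟩ := hg
  refine ⟨hm.exp, Real.exp K, fun x => ?_⟩
  rw [Real.abs_exp]
  exact Real.exp_le_exp.2 ((le_abs_self _).trans (hK x))

lemma comp (hg : BddMeas g) {φ : β → α} (hφ : Measurable φ) : BddMeas fun x => g (φ x) := by
  obtain ⟨hm, K, hK⟩ := hg
  exact ⟨hm.comp hφ, K, fun x => hK _⟩

lemma of_sub_one_le_of_le (hg : BddMeas g) (hh : Measurable h) (hge : ∀ x, g x - 1 ≤ h x)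
    (hle : ∀ x, h x ≤ g x) : BddMeas h := by
  obtain ⟨-, K, hK⟩ := hg
  refine of_mem_Icc (a := -K - 1) (b := K) hh fun x => ⟨?_, (hle x).trans (le_of_abs_le (hK x))⟩
  linarith [hge x, neg_le_of_abs_le (hK x)]

lemma log_integral_exp {H : α × β → ℝ} (hH : BddMeas H) (ν : Measure β)
    [IsProbabilityMeasure ν] : BddMeas fun x => Real.log (∫ y, Real.exp (H (x, y)) ∂ν) := by
  have hmeas := hH.measurable.exp.stronglyMeasurable.integral_prod_right' (ν := ν)
  have hexp (x : α) : BddMeas fun y => Real.exp (H (x, y)) := hH.exp.comp measurable_prodMk_left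
  obtain ⟨-, K, hK⟩ := hH
  refine of_mem_Icc (a := -K) (b := K) hmeas.measurable.log fun x => ?_
  have hmem : ∫ y, Real.exp (H (x, y)) ∂ν ∈ Set.Icc (Real.exp (-K)) (Real.exp K) :=
    (convex_Icc _ _).integral_mem isClosed_Icc
      (.of_forall fun y => ⟨Real.exp_le_exp.2 (abs_le.1 (hK (x, y))).1,
        Real.exp_le_exp.2 (abs_le.1 (hK (x, y))).2⟩) ((hexp x).integrable ν)
  have hpos := (Real.exp_pos _).trans_le hmem.1
  exact ⟨(Real.le_log_iff_exp_le hpos).2 hmem.1, (Real.log_le_iff_le_exp hpos).2 hmem.2⟩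

end BddMeas

/-! ### Entropy and its tensorization -/

/-- The entropy `Ent(Y) = E[Y log Y] - E[Y] log E[Y]` of a nonnegative random variable `Y`. -/
def entropy {Ω : Type*} [MeasurableSpace Ω] (P : Measure Ω) (Y : Ω → ℝ) : ℝ :=
  ∫ ω, Y ω * Real.log (Y ω) ∂P - (∫ ω, Y ω ∂P) * Real.log (∫ ω, Y ω ∂P)

/-- The Bregman divergence of the exponential function: the error at `y` of its first-order
expansion around `x`. -/
def expBregman (x y : ℝ) : ℝ :=
  Real.exp y - Real.exp x - Real.exp x * (y - x)

lemma BddMeas.expBregman {α : Type*} [MeasurableSpace α] {g h : α → ℝ} (hg : BddMeas g)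
    (hh : BddMeas h) : BddMeas fun x => expBregman (g x) (h x) :=
  (hh.exp.sub hg.exp).sub (hg.exp.mul (hh.sub hg))

lemma exp_mul_le_expBregman_add (x y z : ℝ) :
    Real.exp x * z ≤ expBregman x y + (Real.exp (y + z) - Real.exp y) := by
  have hexp : Real.exp (y + z) = Real.exp x * Real.exp (y + z - x) := by
    rw [← Real.exp_add, add_sub_cancel]
  have hle := mul_le_mul_of_nonneg_left (Real.add_one_le_exp (y + z - x)) (Real.exp_pos x).le
  rw [expBregman, hexp]
  linarith

/-- Convexity of `exp` between `-t` and `0`, rescaled by `exp (t * x)`. -/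
lemma expBregman_mul_le (t : ℝ) {x y : ℝ} (hyx : y ≤ x) (hxy : x - y ≤ 1) :
    expBregman (t * x) (t * y)
      ≤ (t - 1 + Real.exp (-t)) * (Real.exp (t * x) * (x - y)) := by
  have hconv := convexOn_exp.2 (Set.mem_univ (0 : ℝ)) (Set.mem_univ (-t))
    (sub_nonneg.2 hxy) (sub_nonneg.2 hyx) (by ring)
  simp only [smul_eq_mul, mul_zero, zero_add, Real.exp_zero, mul_one] at hconv
  have hexp : Real.exp (t * y) = Real.exp (t * x) * Real.exp ((x - y) * -t) := by
    rw [← Real.exp_add]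
    ring_nf
  have hle := mul_le_mul_of_nonneg_left hconv (Real.exp_pos (t * x)).le
  rw [expBregman, hexp]
  linarith

section Tensorization

variable {κ : Type*} {X : κ → Type*} [∀ k, MeasurableSpace (X k)]

section LogMarginal

variable [DecidableEq κ] (μ : ∀ k, Measure (X k))

/-- The log-density obtained from `exp ∘ G` by integrating out the coordinate `i`. -/
def logMarginal (i : κ) (G : (∀ k, X k) → ℝ) (S : ∀ k, X k) : ℝ :=
  Real.log (∫ x, Real.exp (G (Function.update S i x)) ∂μ i)

variable {μ} {G L φ : (∀ k, X k) → ℝ} {i : κ}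

lemma dependsOn_logMarginal {s : Set κ} (hG : DependsOn G s) (i : κ) :
    DependsOn (logMarginal μ i G) (s \ {i}) := by
  intro S T hST
  have hupd (x : X i) : G (Function.update S i x) = G (Function.update T i x) := by
    refine hG fun k hk => ?_
    rcases eq_or_ne k i with rfl | hki
    · simp
    · simpa [hki] using hST k ⟨hk, hki⟩
  simp only [logMarginal, hupd]

variable [∀ k, IsProbabilityMeasure (μ k)]

lemma BddMeas.logMarginal (hG : BddMeas G) (i : κ) : BddMeas (logMarginal μ i G) :=
  (hG.comp measurable_update').log_integral_exp (μ i)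

lemma exp_logMarginal (hG : BddMeas G) (i : κ) (S : ∀ k, X k) :
    Real.exp (logMarginal μ i G S) = ∫ x, Real.exp (G (Function.update S i x)) ∂μ i :=
  Real.exp_log (integral_exp_pos ((hG.comp (measurable_update S)).exp.integrable _))

variable [Fintype κ]

lemma measurePreserving_update_pi (i : κ) :
    MeasurePreserving (fun p : (∀ k, X k) × X i => Function.update p.1 i p.2)
      ((Measure.pi μ).prod (μ i)) (Measure.pi μ) := by
  refine ⟨measurable_update', (Measure.pi_eq fun s hs => ?_).symm⟩
  have hpre : (fun p : (∀ k, X k) × X i => Function.update p.1 i p.2) ⁻¹' Set.univ.pi s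
      = (Set.univ.pi (Function.update s i Set.univ)) ×ˢ s i := by
    ext p
    simp only [Set.mem_preimage, Set.mem_prod, Set.mem_univ_pi]
    refine ⟨fun h => ⟨fun k => ?_, by simpa using h i⟩, fun h k => ?_⟩ <;>
      rcases eq_or_ne k i with rfl | hk
    · simp
    · simpa [hk] using h k
    · simpa using h.2
    · simpa [hk] using h.1 k
  rw [Measure.map_apply measurable_update' (.univ_pi hs), hpre, Measure.prod_prod, Measure.pi_pi,
    Fintype.prod_eq_mul_prod_compl i, Fintype.prod_eq_mul_prod_compl i, Function.update_self,
    measure_univ, one_mul, mul_comm]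
  congr 1
  refine Finset.prod_congr rfl fun k hk => ?_
  rw [Function.update_of_ne (by simpa using hk)]

lemma integral_integral_update {F : (∀ k, X k) → ℝ} (hF : BddMeas F) (i : κ) :
    ∫ S, ∫ x, F (Function.update S i x) ∂μ i ∂Measure.pi μ = ∫ S, F S ∂Measure.pi μ := by
  have hupd := measurePreserving_update_pi (μ := μ) i
  conv_rhs =>
    rw [← hupd.map_eq,
      integral_map_of_stronglyMeasurable hupd.measurable hF.measurable.stronglyMeasurable,
      integral_prod _ ((hF.comp hupd.measurable).integrable _)]

lemma integral_exp_add_sub_logMarginal (hφ : BddMeas φ)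
    (hL : BddMeas L) (hdep : DependsOn φ {i}ᶜ) :
    ∫ S, Real.exp (φ S + (L S - logMarginal μ i L S)) ∂Measure.pi μ
      = ∫ S, Real.exp (φ S) ∂Measure.pi μ := by
  have hM : DependsOn (logMarginal μ i L) {i}ᶜ := by
    simpa [Set.compl_eq_univ_sdiff] using dependsOn_logMarginal (dependsOn_univ L) i
  have hupd {F : (∀ k, X k) → ℝ} (hF : DependsOn F {i}ᶜ) (S : ∀ k, X k) (x : X i) :
      F (Function.update S i x) = F S := hF fun k hk => Function.update_of_ne hk _ _
  rw [← integral_integral_update (hφ.add (hL.sub (hL.logMarginal i))).exp i]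
  refine integral_congr_ae (.of_forall fun S => ?_)
  calc ∫ x, Real.exp (φ (Function.update S i x) + (L (Function.update S i x)
        - logMarginal μ i L (Function.update S i x))) ∂μ i
      = ∫ x, Real.exp (φ S - logMarginal μ i L S)
          * Real.exp (L (Function.update S i x)) ∂μ i := by
        refine integral_congr_ae (.of_forall fun x => ?_)
        simp only [hupd hdep, hupd hM, ← Real.exp_add]
        ring_nf
    _ = Real.exp (φ S) := by
        rw [integral_const_mul, ← exp_logMarginal hL, ← Real.exp_add, sub_add_cancel]

lemma integral_exp_logMarginal (hL : BddMeas L) (i : κ) :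
    ∫ S, Real.exp (logMarginal μ i L S) ∂Measure.pi μ = ∫ S, Real.exp (L S) ∂Measure.pi μ := by
  simp only [exp_logMarginal hL]
  exact integral_integral_update hL.exp i

/-- The cost of integrating out the coordinate `i` from `exp ∘ L`, in the variational form of
`exp_mul_le_expBregman_add`: the correction to the Bregman divergence has mean zero. -/
lemma integral_exp_mul_sub_logMarginal_le (hG : BddMeas G) (hL : BddMeas L) (hφ : BddMeas φ)
    (hdep : DependsOn φ {i}ᶜ) :
    ∫ S, Real.exp (G S) * (L S - logMarginal μ i L S) ∂Measure.pi μ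
      ≤ ∫ S, expBregman (G S) (φ S) ∂Measure.pi μ := by
  have hz : BddMeas fun S => L S - logMarginal μ i L S := hL.sub (hL.logMarginal i)
  have hB := hG.expBregman hφ
  have hshift : BddMeas fun S =>
      Real.exp (φ S + (L S - logMarginal μ i L S)) - Real.exp (φ S) := (hφ.add hz).exp.sub hφ.exp
  calc ∫ S, Real.exp (G S) * (L S - logMarginal μ i L S) ∂Measure.pi μ
      ≤ ∫ S, (expBregman (G S) (φ S)
          + (Real.exp (φ S + (L S - logMarginal μ i L S)) - Real.exp (φ S))) ∂Measure.pi μ :=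
        integral_mono ((hG.exp.mul hz).integrable _) ((hB.add hshift).integrable _) fun S =>
          exp_mul_le_expBregman_add (G S) (φ S) (L S - logMarginal μ i L S)
    _ = ∫ S, expBregman (G S) (φ S) ∂Measure.pi μ := by
        rw [integral_add (hB.integrable _) (hshift.integrable _),
          integral_sub ((hφ.add hz).exp.integrable _) (hφ.exp.integrable _),
          integral_exp_add_sub_logMarginal hφ hL hdep, sub_self, add_zero]

end LogMarginal

variable [Fintype κ] {μ : ∀ k, Measure (X k)} [∀ k, IsProbabilityMeasure (μ k)]
  {G : (∀ k, X k) → ℝ} {φ : κ → (∀ k, X k) → ℝ}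

lemma exists_dependsOn_compl_integral_exp_mul_sub_le (hG : BddMeas G) (hφ : ∀ i, BddMeas (φ i))
    (hdep : ∀ i, DependsOn (φ i) {i}ᶜ) (s : Finset κ) :
    ∃ L, BddMeas L ∧ DependsOn L (s : Set κ)ᶜ
      ∧ ∫ S, Real.exp (L S) ∂Measure.pi μ = ∫ S, Real.exp (G S) ∂Measure.pi μ
      ∧ ∫ S, Real.exp (G S) * (G S - L S) ∂Measure.pi μ
          ≤ ∑ i ∈ s, ∫ S, expBregman (G S) (φ i S) ∂Measure.pi μ := by
  classical
  induction s using Finset.induction_on with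
  | empty => exact ⟨G, hG, by simpa using dependsOn_univ G, rfl, by simp⟩
  | insert i s hi ih =>
    obtain ⟨L, hL, hLs, hmean, hcost⟩ := ih
    refine ⟨logMarginal μ i L, hL.logMarginal i, ?_,
      (integral_exp_logMarginal hL i).trans hmean, ?_⟩
    · have hset : ((insert i s : Finset κ) : Set κ)ᶜ = (s : Set κ)ᶜ \ {i} := by
        ext k
        simp [and_comm]
      exact hset ▸ dependsOn_logMarginal hLs i
    · have hsplit (S : ∀ k, X k) : Real.exp (G S) * (G S - logMarginal μ i L S)
          = Real.exp (G S) * (L S - logMarginal μ i L S) + Real.exp (G S) * (G S - L S) := by ring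
      simp only [hsplit]
      rw [Finset.sum_insert hi, integral_add
        ((hG.exp.mul (hL.sub (hL.logMarginal i))).integrable _)
        ((hG.exp.mul (hG.sub hL)).integrable _)]
      exact add_le_add (integral_exp_mul_sub_logMarginal_le hG hL (hφ i) (hdep i)) hcost

lemma entropy_exp_le_sum_integral_expBregman (hG : BddMeas G) (hφ : ∀ i, BddMeas (φ i))
    (hdep : ∀ i, DependsOn (φ i) {i}ᶜ) :
    entropy (Measure.pi μ) (fun S => Real.exp (G S))
      ≤ ∑ i, ∫ S, expBregman (G S) (φ i S) ∂Measure.pi μ := by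
  obtain ⟨L, -, hdepL, hmean, hcost⟩ :=
    exists_dependsOn_compl_integral_exp_mul_sub_le (μ := μ) hG hφ hdep Finset.univ
  have hconst (S : ∀ k, X k) : L S = Real.log (∫ T, Real.exp (G T) ∂Measure.pi μ) := by
    have hL' (T : ∀ k, X k) : L T = L S := hdepL fun k hk => by simp at hk
    rw [← hmean]
    simp [hL']
  refine hcost.trans_eq' ?_
  simp only [hconst, mul_sub]
  rw [integral_sub ((hG.exp.mul hG).integrable _) ((hG.exp.integrable _).mul_const _),
    integral_mul_const]
  simp [entropy]

end Tensorization

/-! ### Poissonian bound on the log-Laplace transform -/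

lemma antitoneOn_div_exp_sub_one {L L' : ℝ → ℝ} (hL : ∀ t > 0, HasDerivAt L (L' t) t)
    (hode : ∀ t > 0, (1 - Real.exp (-t)) * L' t ≤ L t) :
    AntitoneOn (fun t => L t / (Real.exp t - 1)) (Set.Ioi 0) := by
  have hder (t : ℝ) (ht : 0 < t) : HasDerivAt (fun t => L t / (Real.exp t - 1))
      ((L' t * (Real.exp t - 1) - L t * Real.exp t) / (Real.exp t - 1) ^ 2) t :=
    (hL t ht).div ((Real.hasDerivAt_exp t).sub_const 1) (sub_pos.2 (Real.one_lt_exp_iff.2 ht)).ne'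
  refine antitoneOn_of_hasDerivWithinAt_nonpos (convex_Ioi 0)
    (fun t ht => (hder t ht).continuousAt.continuousWithinAt)
    (fun t ht => (hder t (interior_subset ht)).hasDerivWithinAt) fun t ht => ?_
  refine div_nonpos_of_nonpos_of_nonneg (sub_nonpos.2 ?_) (sq_nonneg _)
  calc L' t * (Real.exp t - 1) = (1 - Real.exp (-t)) * L' t * Real.exp t := by
        linear_combination L' t * (by rw [← Real.exp_add]; simp : Real.exp (-t) * Real.exp t = 1)
    _ ≤ L t * Real.exp t := by
        gcongr
        exact hode t (interior_subset ht)

lemma tendsto_div_exp_sub_one {L : ℝ → ℝ} {v : ℝ} (hL : HasDerivAt L v 0) (hL0 : L 0 = 0) :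
    Filter.Tendsto (fun t => L t / (Real.exp t - 1)) (nhdsWithin 0 {0}ᶜ) (nhds v) := by
  have hexp : HasDerivAt Real.exp 1 0 := by simpa using Real.hasDerivAt_exp 0
  have hslope := (hasDerivAt_iff_tendsto_slope.1 hL).div (hasDerivAt_iff_tendsto_slope.1 hexp)
    one_ne_zero
  rw [div_one] at hslope
  refine hslope.congr' ?_
  filter_upwards [self_mem_nhdsWithin] with t ht
  have ht0 : t ≠ 0 := ht
  simp only [Pi.div_apply, slope_def_field, hL0, sub_zero, Real.exp_zero]
  exact div_div_div_cancel_right₀ ht0 _ _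

lemma le_exp_sub_one_mul_of_deriv_le {L L' : ℝ → ℝ} (hL : ∀ t ≥ 0, HasDerivAt L (L' t) t)
    (hL0 : L 0 = 0) (hode : ∀ t > 0, (1 - Real.exp (-t)) * L' t ≤ L t) {t : ℝ} (ht : 0 < t) :
    L t ≤ (Real.exp t - 1) * L' 0 := by
  have hanti := antitoneOn_div_exp_sub_one (fun t ht => hL t ht.le) hode
  have hlim := (tendsto_div_exp_sub_one (hL 0 le_rfl) hL0).mono_left
    (nhdsGT_le_nhdsNE 0)
  have hle : L t / (Real.exp t - 1) ≤ L' 0 := by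
    refine ge_of_tendsto hlim ?_
    filter_upwards [Ioo_mem_nhdsGT ht] with s hs
    exact hanti hs.1 ht hs.2.le
  rwa [div_le_iff₀' (sub_pos.2 (Real.one_lt_exp_iff.2 ht))] at hle

/-! ### Bernstein tails from a Poissonian Laplace transform -/

lemma one_sub_div_three_mul_exp_sub_le {x : ℝ} (hx : 0 ≤ x) :
    (1 - x / 3) * (Real.exp x - 1 - x) ≤ x ^ 2 / 2 := by
  -- After multiplication by `exp (-x)`, the claim is `φ 0 ≤ φ x`.
  let φ : ℝ → ℝ := fun x => (3 + 2 * x + x ^ 2 / 2) * Real.exp (-x) + x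
  have hφ (x : ℝ) : HasDerivAt φ (1 - (1 + x + x ^ 2 / 2) * Real.exp (-x)) x := by
    have h := (((((hasDerivAt_id x).const_mul 2).const_add 3).add
      ((hasDerivAt_pow 2 x).div_const 2)).mul (hasDerivAt_neg x).exp).add (hasDerivAt_id x)
    refine h.congr_deriv ?_
    simp only [Pi.add_apply, id]
    push_cast
    ring
  have hmono : MonotoneOn φ (Set.Ici 0) := by
    refine monotoneOn_of_hasDerivWithinAt_nonneg (convex_Ici 0)
      (fun x _ => (hφ x).continuousAt.continuousWithinAt)
      (fun x _ => (hφ x).hasDerivWithinAt) fun x hx => ?_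
    rw [Real.exp_neg, ← div_eq_mul_inv, sub_nonneg, div_le_one (Real.exp_pos x)]
    exact Real.quadratic_le_exp_of_nonneg (interior_subset hx)
  have hle := mul_le_mul_of_nonneg_right (hmono Set.self_mem_Ici hx hx) (Real.exp_pos x).le
  have hexp : Real.exp (-x) * Real.exp x = 1 := by rw [← Real.exp_add]; simp
  simp only [φ, add_mul, mul_assoc, hexp] at hle
  norm_num at hle
  linarith

/-- The choice `t = s / (v + s / 3)`, nearly optimal in Chernoff's bound, makes the exponent
rational. -/
lemma exp_sub_one_mul_sub_le {v s : ℝ} (hv : 0 ≤ v) (hs : 0 < s) :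
    (Real.exp (s / (v + s / 3)) - 1) * v - s / (v + s / 3) * (v + s)
      ≤ -s ^ 2 / (2 * (v + s / 3)) := by
  have hw : 0 < v + s / 3 := by positivity
  set w := v + s / 3 with hw_def
  have hbern := mul_le_mul_of_nonneg_right
    (one_sub_div_three_mul_exp_sub_le (x := s / w) (by positivity)) hw.le
  have hvw : (1 - s / w / 3) * w = v := by
    field_simp
    rw [hw_def]
    ring
  have hsq : (s / w) ^ 2 / 2 * w = s ^ 2 / (2 * w) := by field_simp
  have hlin : s / w * s = s ^ 2 / (2 * w) + s ^ 2 / (2 * w) := by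
    field_simp
    ring
  rw [mul_right_comm, hvw, hsq] at hbern
  rw [neg_div]
  linarith

open ProbabilityTheory in
lemma measureReal_ge_le_of_mgf_le {Ω : Type*} [MeasurableSpace Ω] {P : Measure Ω}
    [IsFiniteMeasure P] {Y : Ω → ℝ} {v s : ℝ} (hv : 0 ≤ v) (hs : 0 < s)
    (hint : ∀ t > 0, Integrable (fun ω => Real.exp (t * Y ω)) P)
    (hmgf : ∀ t > 0, mgf Y P t ≤ Real.exp ((Real.exp t - 1) * v)) :
    P.real {ω | v + s ≤ Y ω} ≤ Real.exp (-s ^ 2 / (2 * (v + s / 3))) := by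
  set t := s / (v + s / 3)
  have ht : 0 < t := by positivity
  calc P.real {ω | v + s ≤ Y ω}
      ≤ Real.exp (-t * (v + s)) * mgf Y P t := measure_ge_le_exp_mul_mgf (v + s) ht.le (hint t ht)
    _ ≤ Real.exp (-t * (v + s)) * Real.exp ((Real.exp t - 1) * v) := by
        gcongr
        exact hmgf t ht
    _ ≤ Real.exp (-s ^ 2 / (2 * (v + s / 3))) := by
        rw [← Real.exp_add, Real.exp_le_exp]
        linarith [exp_sub_one_mul_sub_le hv hs]

/-! ### Self-bounding functions -/

/-- Boucheron, Lugosi and Massart's self-bounding functions of the coordinates `S k`: the witness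
`g' i` is blind to the coordinate `i`, lies below `g` by at most `1`, and the deficits add up to at
most `g`. -/
structure IsSelfBounding {κ : Type*} [Fintype κ] {X : κ → Type*} (g : (∀ k, X k) → ℝ)
    (g' : κ → (∀ k, X k) → ℝ) : Prop where
  dependsOn : ∀ i, DependsOn (g' i) {i}ᶜ
  le : ∀ i S, g' i S ≤ g S
  sub_le_one : ∀ i S, g S - g' i S ≤ 1
  sum_sub_le : ∀ S, ∑ i, (g S - g' i S) ≤ g S

namespace IsSelfBounding

open ProbabilityTheory

variable {κ : Type*} [Fintype κ] {X : κ → Type*} {g : (∀ k, X k) → ℝ} {g' : κ → (∀ k, X k) → ℝ}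

lemma nonneg (h : IsSelfBounding g g') (S : ∀ k, X k) : 0 ≤ g S :=
  (Finset.sum_nonneg fun i _ => sub_nonneg.2 (h.le i S)).trans (h.sum_sub_le S)

lemma sum_expBregman_le (h : IsSelfBounding g g') (t : ℝ) (S : ∀ k, X k) :
    ∑ i, expBregman (t * g S) (t * g' i S)
      ≤ (t - 1 + Real.exp (-t)) * (g S * Real.exp (t * g S)) := by
  have hcoef : 0 ≤ t - 1 + Real.exp (-t) := by linarith [Real.add_one_le_exp (-t)]
  calc ∑ i, expBregman (t * g S) (t * g' i S)
      ≤ ∑ i, (t - 1 + Real.exp (-t)) * (Real.exp (t * g S) * (g S - g' i S)) :=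
        Finset.sum_le_sum fun i _ => expBregman_mul_le t (h.le i S) (h.sub_le_one i S)
    _ = (t - 1 + Real.exp (-t)) * ((∑ i, (g S - g' i S)) * Real.exp (t * g S)) := by
        rw [← Finset.mul_sum, ← Finset.mul_sum, mul_comm (Real.exp _)]
    _ ≤ (t - 1 + Real.exp (-t)) * (g S * Real.exp (t * g S)) := by
        gcongr
        exact h.sum_sub_le S

variable [∀ k, MeasurableSpace (X k)] {μ : ∀ k, Measure (X k)} [∀ k, IsProbabilityMeasure (μ k)]

lemma entropy_exp_le (h : IsSelfBounding g g') (hg : BddMeas g) (hg' : ∀ i, Measurable (g' i))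
    (t : ℝ) :
    entropy (Measure.pi μ) (fun S => Real.exp (t * g S))
      ≤ (t - 1 + Real.exp (-t)) * ∫ S, g S * Real.exp (t * g S) ∂Measure.pi μ := by
  have hg'b (i : κ) : BddMeas (g' i) :=
    hg.of_sub_one_le_of_le (hg' i) (fun S => by linarith [h.sub_le_one i S]) (h.le i)
  have hB (i : κ) := ((hg.const_mul t).expBregman ((hg'b i).const_mul t)).integrable (Measure.pi μ)
  refine (entropy_exp_le_sum_integral_expBregman (hg.const_mul t) (fun i => (hg'b i).const_mul t)
    fun i S T hST => congrArg (t * ·) (h.dependsOn i hST)).trans ?_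
  rw [← integral_finsetSum _ fun i _ => hB i, ← integral_const_mul]
  exact integral_mono (integrable_finsetSum _ fun i _ => hB i)
    (((hg.mul (hg.const_mul t).exp).integrable _).const_mul _) (h.sum_expBregman_le t)

lemma one_sub_exp_neg_mul_deriv_cgf_le (h : IsSelfBounding g g') (hg : BddMeas g)
    (hg' : ∀ i, Measurable (g' i)) (t : ℝ) :
    (1 - Real.exp (-t)) * deriv (cgf g (Measure.pi μ)) t ≤ cgf g (Measure.pi μ) t := by
  have hint (t : ℝ) : Integrable (fun S => Real.exp (t * g S)) (Measure.pi μ) :=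
    (hg.const_mul t).exp.integrable _
  have hmem : t ∈ interior (integrableExpSet g (Measure.pi μ)) := by
    simp [integrableExpSet, hint]
  have hent : entropy (Measure.pi μ) (fun S => Real.exp (t * g S))
      = t * ∫ S, g S * Real.exp (t * g S) ∂Measure.pi μ
        - mgf g (Measure.pi μ) t * cgf g (Measure.pi μ) t := by
    simp only [entropy, Real.log_exp, mgf, cgf, ← integral_const_mul]
    congr! 3
    ring
  have hle := h.entropy_exp_le (μ := μ) hg hg' t
  rw [deriv_cgf hmem, ← mul_div_assoc, div_le_iff₀ (mgf_pos (hint t))]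
  linarith

lemma mgf_le (h : IsSelfBounding g g') (hg : BddMeas g) (hg' : ∀ i, Measurable (g' i)) {t : ℝ}
    (ht : 0 < t) :
    mgf g (Measure.pi μ) t ≤ Real.exp ((Real.exp t - 1) * ∫ S, g S ∂Measure.pi μ) := by
  have hint (t : ℝ) : Integrable (fun S => Real.exp (t * g S)) (Measure.pi μ) :=
    (hg.const_mul t).exp.integrable _
  have hmem (t : ℝ) : t ∈ interior (integrableExpSet g (Measure.pi μ)) := by
    simp [integrableExpSet, hint]
  have hcgf := le_exp_sub_one_mul_of_deriv_le
    (fun t _ => (analyticAt_cgf (hmem t)).differentiableAt.hasDerivAt) cgf_zero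
    (fun t _ => h.one_sub_exp_neg_mul_deriv_cgf_le hg hg' t) ht
  rw [deriv_cgf_zero (hmem 0), probReal_univ, div_one] at hcgf
  rwa [← Real.log_le_iff_le_exp (mgf_pos (hint t))]

theorem measureReal_ge_le (h : IsSelfBounding g g') (hg : BddMeas g)
    (hg' : ∀ i, Measurable (g' i)) {s : ℝ} (hs : 0 < s) :
    (Measure.pi μ).real {S | (∫ S, g S ∂Measure.pi μ) + s ≤ g S}
      ≤ Real.exp (-s ^ 2 / (2 * ((∫ S, g S ∂Measure.pi μ) + s / 3))) :=
  measureReal_ge_le_of_mgf_le (integral_nonneg h.nonneg) hs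
    (fun t _ => (hg.const_mul t).exp.integrable _) fun _ ht => h.mgf_le hg hg' ht

end IsSelfBounding

/-! ### Suprema of sums -/

/-- The supremum over `l` of the `J`-partial sums of `u l k (S k)`, with a deterministic offset
`e l`. -/
def supSum {κ ι : Type*} {X : κ → Type*} (u : ι → ∀ k, X k → ℝ) (e : ι → ℝ) (J : Finset κ)
    (S : ∀ k, X k) : ℝ :=
  ⨆ l, (∑ k ∈ J, u l k (S k) + e l)

section SupSum

variable {κ ι : Type*} {X : κ → Type*} {u : ι → ∀ k, X k → ℝ} {e : ι → ℝ}

lemma dependsOn_supSum (J : Finset κ) : DependsOn (supSum u e J) J := by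
  intro S T hST
  refine iSup_congr fun l => ?_
  rw [Finset.sum_congr rfl fun k hk => by rw [hST k hk]]

lemma measurable_supSum [Countable ι] [∀ k, MeasurableSpace (X k)]
    (hu : ∀ l k, Measurable (u l k)) (J : Finset κ) : Measurable (supSum u e J) :=
  .iSup fun l =>
    (Finset.measurable_fun_sum J fun k _ => (hu l k).comp (measurable_pi_apply k)).add_const _

lemma bddAbove_range_sum_add (hu : ∀ l k x, u l k x ≤ 1) (he : BddAbove (Set.range e))
    (J : Finset κ) (S : ∀ k, X k) :
    BddAbove (Set.range fun l => ∑ k ∈ J, u l k (S k) + e l) := by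
  obtain ⟨B, hB⟩ := he
  refine ⟨J.card + B, ?_⟩
  rintro _ ⟨l, rfl⟩
  refine add_le_add ?_ (hB ⟨l, rfl⟩)
  simpa using Finset.sum_le_card_nsmul J (fun k => u l k (S k)) 1 fun k _ => hu l k _

lemma bddMeas_supSum [Countable ι] [Nonempty ι] [∀ k, MeasurableSpace (X k)]
    (hum : ∀ l k, Measurable (u l k)) (hu : ∀ l k x, u l k x ∈ Set.Icc 0 1) (he0 : ∀ l, 0 ≤ e l)
    (he : BddAbove (Set.range e)) (J : Finset κ) : BddMeas (supSum u e J) := by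
  obtain ⟨B, hB⟩ := he
  refine .of_mem_Icc (a := 0) (b := J.card + B) (measurable_supSum hum J) fun S => ⟨?_, ?_⟩
  · exact Real.iSup_nonneg fun l =>
      add_nonneg (Finset.sum_nonneg fun k _ => (hu l k (S k)).1) (he0 l)
  · refine ciSup_le fun l => add_le_add ?_ (hB ⟨l, rfl⟩)
    simpa using Finset.sum_le_card_nsmul J (fun k => u l k (S k)) 1 fun k _ => (hu l k _).2

variable [Fintype κ] [DecidableEq κ]

lemma card_sub_one_mul_supSum_le [Nonempty ι] (hu : ∀ l k x, u l k x ≤ 1) (he0 : ∀ l, 0 ≤ e l)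
    (he : BddAbove (Set.range e)) (S : ∀ k, X k) :
    (Fintype.card κ - 1) * supSum u e Finset.univ S ≤ ∑ i, supSum u e {i}ᶜ S := by
  rcases isEmpty_or_nonempty κ with hκ | hκ
  · simpa [supSum] using Real.iSup_nonneg he0
  have hcard : (1 : ℝ) ≤ Fintype.card κ := by exact_mod_cast Fintype.card_pos
  rw [supSum, Real.mul_iSup_of_nonneg (sub_nonneg.2 hcard)]
  refine ciSup_le fun l => ?_
  have hcompl (i : κ) : ∑ k ∈ {i}ᶜ, u l k (S k) = ∑ k, u l k (S k) - u l i (S i) :=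
    eq_sub_of_add_eq' (Fintype.sum_eq_add_sum_compl i fun k => u l k (S k)).symm
  calc (Fintype.card κ - 1) * (∑ k, u l k (S k) + e l)
      ≤ (Fintype.card κ - 1) * ∑ k, u l k (S k) + Fintype.card κ * e l := by
        linarith [he0 l]
    _ = ∑ i, (∑ k ∈ {i}ᶜ, u l k (S k) + e l) := by
        simp only [hcompl, Finset.sum_add_distrib, Finset.sum_sub_distrib, Finset.sum_const,
          Finset.card_univ, nsmul_eq_mul]
        ring
    _ ≤ ∑ i, supSum u e {i}ᶜ S :=
        Finset.sum_le_sum fun i _ => le_ciSup (bddAbove_range_sum_add hu he {i}ᶜ S) l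

lemma isSelfBounding_supSum [Nonempty ι] (hu : ∀ l k x, u l k x ∈ Set.Icc 0 1)
    (he0 : ∀ l, 0 ≤ e l) (he : BddAbove (Set.range e)) :
    IsSelfBounding (supSum u e Finset.univ) fun i => supSum u e {i}ᶜ := by
  have hu1 (l : ι) (k : κ) (x : X k) : u l k x ≤ 1 := (hu l k x).2
  have hsum (l : ι) (i : κ) (S : ∀ k, X k) :
      ∑ k, u l k (S k) = u l i (S i) + ∑ k ∈ {i}ᶜ, u l k (S k) := Fintype.sum_eq_add_sum_compl i _
  refine ⟨fun i => by simpa using dependsOn_supSum (u := u) (e := e) ({i}ᶜ : Finset κ),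
    fun i S => ?_, fun i S => ?_, fun S => ?_⟩
  · refine ciSup_mono (bddAbove_range_sum_add hu1 he _ S) fun l => ?_
    linarith [hsum l i S, (hu l i (S i)).1]
  · refine sub_le_iff_le_add.2 (ciSup_le fun l => ?_)
    have hle : ∑ k ∈ {i}ᶜ, u l k (S k) + e l ≤ supSum u e {i}ᶜ S :=
      le_ciSup (bddAbove_range_sum_add hu1 he {i}ᶜ S) l
    linarith [hsum l i S, hu1 l i (S i)]
  · have hle := card_sub_one_mul_supSum_le hu1 he0 he S
    rw [Finset.sum_sub_distrib, Finset.sum_const, Finset.card_univ, nsmul_eq_mul]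
    linarith

end SupSum

/-! ### Bernstein quantiles -/

/-- The positive root `ε` of `n ε² = 2 c log (1 / δ) (w + ε / 3)`: the deviation that Bernstein's
inequality for the mean of `n` observations of range `c` and variance proxy `c w` attains with
probability at most `δ`. -/
def bernsteinRadius (c w n δ : ℝ) : ℝ :=
  √((c * Real.log (1 / δ) / (3 * n)) ^ 2 + 2 * c * Real.log (1 / δ) * w / n)
    + c * Real.log (1 / δ) / (3 * n)

lemma bernsteinRadius_pos {c w n δ : ℝ} (hc : 0 < c) (hn : 0 < n) (hδ : δ ∈ Set.Ioo 0 1) :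
    0 < bernsteinRadius c w n δ := by
  have hlog : 0 < Real.log (1 / δ) := Real.log_pos (one_lt_one_div hδ.1 hδ.2)
  rw [bernsteinRadius]
  positivity

lemma exp_neg_bernsteinRadius {c w n δ : ℝ} (hc : 0 < c) (hw : 0 ≤ w) (hn : 0 < n)
    (hδ : δ ∈ Set.Ioo 0 1) :
    Real.exp (-(n * bernsteinRadius c w n δ ^ 2)
      / (2 * c * (w + bernsteinRadius c w n δ / 3))) = δ := by
  have hlog : 0 < Real.log (1 / δ) := Real.log_pos (one_lt_one_div hδ.1 hδ.2)
  have hε := bernsteinRadius_pos (w := w) hc hn hδ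
  have hroot : n * bernsteinRadius c w n δ ^ 2
      = Real.log (1 / δ) * (2 * c * (w + bernsteinRadius c w n δ / 3)) := by
    have hsq := Real.sq_sqrt (x := (c * Real.log (1 / δ) / (3 * n)) ^ 2
      + 2 * c * Real.log (1 / δ) * w / n) (by positivity)
    rw [bernsteinRadius]
    set q := √((c * Real.log (1 / δ) / (3 * n)) ^ 2 + 2 * c * Real.log (1 / δ) * w / n)
    field_simp at hsq ⊢
    linear_combination hsq
  rw [hroot, ← neg_mul, mul_div_cancel_right₀ _ (by positivity), one_div, Real.log_inv, neg_neg,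
    Real.exp_log hδ.1]

lemma one_sub_le_measureReal_le_of_measureReal_ge_le {Ω : Type*} [MeasurableSpace Ω]
    {P : Measure Ω} [IsProbabilityMeasure P] {Z : Ω → ℝ} {x δ : ℝ}
    (h : P.real {ω | x ≤ Z ω} ≤ δ) : 1 - δ ≤ P.real {ω | Z ω ≤ x} := by
  have hunion : {ω | x ≤ Z ω} ∪ {ω | Z ω ≤ x} = Set.univ :=
    Set.eq_univ_of_forall fun ω => le_total x (Z ω)
  have hle := measureReal_union_le (μ := P) {ω | x ≤ Z ω} {ω | Z ω ≤ x}
  rw [hunion, probReal_univ] at hle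
  linarith

/-! ### Negative supremum deviations -/

section SdMinus

variable {X ι : Type*} {f : ι → X → ℝ} {a b : ℝ} {m : ℕ}

/-- The summand `(b - f(s)) / (b - a)`, which lies in `[0, 1]` when `f` takes values in `[a, b]`. -/
def normSummand (f : ι → X → ℝ) (a b : ℝ) (l : ι) (x : X) : ℝ :=
  (b - f l x) / (b - a)

lemma normSummand_mem_Icc (hab : a < b) (hrange : ∀ l x, f l x ∈ Set.Icc a b) (l : ι) (x : X) :
    normSummand f a b l x ∈ Set.Icc 0 1 := by
  have hc : 0 < b - a := sub_pos.2 hab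
  refine ⟨div_nonneg (sub_nonneg.2 (hrange l x).2) hc.le, (div_le_one hc).2 ?_⟩
  linarith [(hrange l x).1]

variable [MeasurableSpace X] {μ : Measure X}

/-- The offset `(m / (b - a)) (E f - inf_F E)` that turns the supremum of the normalized sums into
the deviation `SD⁻(F, S)` shifted by `γ_F`. -/
def sdOffset (f : ι → X → ℝ) (μ : Measure X) (a b : ℝ) (m : ℕ) (l : ι) : ℝ :=
  m / (b - a) * (∫ x, f l x ∂μ - ⨅ l', ∫ x, f l' x ∂μ)

/-- The supremum of the sums of normalized summands over the sample points indexed by `J`, with the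
offsets `sdOffset`; for `J` the whole sample it is `(m / (b - a)) (SD⁻(F, S) + γ_F)`. -/
def normSd (f : ι → X → ℝ) (μ : Measure X) (a b : ℝ) (J : Finset (Fin m)) (S : Fin m → X) : ℝ :=
  supSum (fun l _ => normSummand f a b l) (sdOffset f μ a b m) J S

variable [IsProbabilityMeasure μ]

lemma integral_mem_Icc (hmeas : ∀ l, Measurable (f l)) (hrange : ∀ l x, f l x ∈ Set.Icc a b)
    (l : ι) : ∫ x, f l x ∂μ ∈ Set.Icc a b :=
  (convex_Icc a b).integral_mem isClosed_Icc (.of_forall (hrange l))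
    ((BddMeas.of_mem_Icc (hmeas l) (hrange l)).integrable μ)

lemma sdOffset_nonneg (hab : a < b) (hmeas : ∀ l, Measurable (f l))
    (hrange : ∀ l x, f l x ∈ Set.Icc a b) (l : ι) : 0 ≤ sdOffset f μ a b m l := by
  have hbdd : BddBelow (Set.range fun l => ∫ x, f l x ∂μ) :=
    ⟨a, Set.forall_mem_range.2 fun l => (integral_mem_Icc hmeas hrange l).1⟩
  exact mul_nonneg (div_nonneg m.cast_nonneg (sub_pos.2 hab).le) (sub_nonneg.2 (ciInf_le hbdd l))

lemma bddAbove_range_sdOffset (hab : a < b) (hmeas : ∀ l, Measurable (f l))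
    (hrange : ∀ l x, f l x ∈ Set.Icc a b) : BddAbove (Set.range (sdOffset f μ a b m)) := by
  refine ⟨m / (b - a) * (b - ⨅ l', ∫ x, f l' x ∂μ), Set.forall_mem_range.2 fun l => ?_⟩
  have := sub_pos.2 hab
  rw [sdOffset]
  gcongr
  exact (integral_mem_Icc hmeas hrange l).2

lemma isSelfBounding_normSd [Nonempty ι] (hab : a < b) (hmeas : ∀ l, Measurable (f l))
    (hrange : ∀ l x, f l x ∈ Set.Icc a b) :
    IsSelfBounding (normSd (m := m) f μ a b Finset.univ) fun i => normSd f μ a b {i}ᶜ :=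
  isSelfBounding_supSum (fun l _ => normSummand_mem_Icc hab hrange l)
    (sdOffset_nonneg hab hmeas hrange) (bddAbove_range_sdOffset hab hmeas hrange)

lemma bddAbove_range_integral_sub_mean (hm : 0 < m) (hmeas : ∀ l, Measurable (f l))
    (hrange : ∀ l x, f l x ∈ Set.Icc a b) (S : Fin m → X) :
    BddAbove (Set.range fun l => ∫ x, f l x ∂μ - (m : ℝ)⁻¹ * ∑ k, f l (S k)) := by
  refine ⟨b - a, Set.forall_mem_range.2 fun l => sub_le_sub (integral_mem_Icc hmeas hrange l).2 ?_⟩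
  rw [le_inv_mul_iff₀ (by exact_mod_cast hm)]
  simpa using Finset.card_nsmul_le_sum Finset.univ (fun k => f l (S k)) a fun k _ => (hrange l _).1

lemma normSd_univ [Nonempty ι] (hab : a < b) (hm : 0 < m) (hmeas : ∀ l, Measurable (f l))
    (hrange : ∀ l x, f l x ∈ Set.Icc a b) (S : Fin m → X) :
    normSd f μ a b Finset.univ S = m / (b - a) * (sdMinus f μ S + gammaF f μ b) := by
  have hc : 0 < b - a := sub_pos.2 hab
  rw [sdMinus, ciSup_add (bddAbove_range_integral_sub_mean hm hmeas hrange S),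
    Real.mul_iSup_of_nonneg (by positivity), normSd, supSum]
  refine iSup_congr fun l => ?_
  simp only [normSummand, sdOffset, gammaF, ← Finset.sum_div, Finset.sum_sub_distrib,
    Finset.sum_const, Finset.card_univ, Fintype.card_fin, nsmul_eq_mul]
  field_simp
  ring

variable [Countable ι] [Nonempty ι]

lemma bddMeas_normSd (hab : a < b) (hmeas : ∀ l, Measurable (f l))
    (hrange : ∀ l x, f l x ∈ Set.Icc a b) (J : Finset (Fin m)) : BddMeas (normSd f μ a b J) :=
  bddMeas_supSum (fun l _ => ((hmeas l).const_sub b).div_const _)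
    (fun l _ => normSummand_mem_Icc hab hrange l) (sdOffset_nonneg hab hmeas hrange)
    (bddAbove_range_sdOffset hab hmeas hrange) J

lemma bddMeas_sdMinus (hab : a < b) (hm : 0 < m) (hmeas : ∀ l, Measurable (f l))
    (hrange : ∀ l x, f l x ∈ Set.Icc a b) : BddMeas (sdMinus f μ : (Fin m → X) → ℝ) := by
  have hc : b - a ≠ 0 := (sub_pos.2 hab).ne'
  have hsd : (sdMinus f μ : (Fin m → X) → ℝ) =
      fun S => (b - a) / m * normSd f μ a b Finset.univ S - gammaF f μ b := by
    funext S
    rw [normSd_univ hab hm hmeas hrange]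
    field_simp
    ring
  rw [hsd]
  exact ((bddMeas_normSd hab hmeas hrange _).const_mul _).sub (.const _)

lemma integral_normSd_univ (hab : a < b) (hm : 0 < m) (hmeas : ∀ l, Measurable (f l))
    (hrange : ∀ l x, f l x ∈ Set.Icc a b) :
    ∫ S, normSd f μ a b Finset.univ S ∂(Measure.pi fun _ : Fin m => μ)
      = m / (b - a)
        * (∫ S, sdMinus f μ S ∂(Measure.pi fun _ : Fin m => μ) + gammaF f μ b) := by
  simp only [normSd_univ hab hm hmeas hrange]
  rw [integral_const_mul, integral_add ((bddMeas_sdMinus hab hm hmeas hrange).integrable _)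
    (integrable_const _), integral_const, probReal_univ, one_smul]

lemma integral_sdMinus_add_gammaF_nonneg (hab : a < b) (hm : 0 < m) (hmeas : ∀ l, Measurable (f l))
    (hrange : ∀ l x, f l x ∈ Set.Icc a b) :
    0 ≤ ∫ S, sdMinus f μ S ∂(Measure.pi fun _ : Fin m => μ) + gammaF f μ b := by
  have hscale : (0 : ℝ) < m / (b - a) := div_pos (by exact_mod_cast hm) (sub_pos.2 hab)
  refine nonneg_of_mul_nonneg_right ?_ hscale
  rw [← integral_normSd_univ hab hm hmeas hrange]
  exact integral_nonneg (isSelfBounding_normSd hab hmeas hrange).nonneg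

theorem measureReal_sdMinus_ge_le (hab : a < b) (hm : 0 < m) (hmeas : ∀ l, Measurable (f l))
    (hrange : ∀ l x, f l x ∈ Set.Icc a b) {EZ ε : ℝ}
    (hEZ : EZ = ∫ S, sdMinus f μ S ∂(Measure.pi fun _ : Fin m => μ)) (hε : 0 < ε) :
    (Measure.pi fun _ : Fin m => μ).real {S | EZ + ε ≤ sdMinus f μ S}
      ≤ Real.exp (-(m * ε ^ 2) / (2 * (b - a) * (EZ + gammaF f μ b + ε / 3))) := by
  have hc : 0 < b - a := sub_pos.2 hab
  have hw : 0 ≤ EZ + gammaF f μ b := hEZ ▸ integral_sdMinus_add_gammaF_nonneg hab hm hmeas hrange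
  have hscale : (0 : ℝ) < m / (b - a) := by positivity
  have htail := (isSelfBounding_normSd (μ := μ) hab hmeas hrange).measureReal_ge_le
    (μ := fun _ : Fin m => μ) (bddMeas_normSd hab hmeas hrange _)
    (fun i => (bddMeas_normSd hab hmeas hrange {i}ᶜ).measurable) (mul_pos hscale hε)
  rw [integral_normSd_univ hab hm hmeas hrange, ← hEZ] at htail
  simp only [normSd_univ hab hm hmeas hrange, ← mul_add, mul_le_mul_iff_right₀ hscale,
    add_right_comm EZ, add_le_add_iff_right] at htail
  refine htail.trans_eq ?_
  congr 1
  field_simp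

end SdMinus

theorem stmt_16_general {X : Type*} [MeasurableSpace X] {ι : Type*} [Countable ι] [Nonempty ι]
    (f : ι → X → ℝ) (a b : ℝ) (hab : a < b)
    (hmeas : ∀ l : ι, Measurable (f l))
    (hrange : ∀ (l : ι) (x : X), f l x ∈ Set.Icc a b)
    (μ : Measure X) [IsProbabilityMeasure μ] (m : ℕ) (hm : 0 < m)
    (EZ : ℝ) (hEZ : EZ = ∫ S : Fin m → X, sdMinus f μ S ∂(Measure.pi fun _ : Fin m => μ)) :
    (∀ ε : ℝ, 0 < ε →
      ((Measure.pi fun _ : Fin m => μ)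
          {S : Fin m → X | sdMinus f μ S ≥ EZ + ε}).toReal ≤
        Real.exp (-((m : ℝ) * ε ^ 2) / (2 * (b - a) * (EZ + gammaF f μ b + ε / 3)))) ∧
    ∀ δ : ℝ, δ ∈ Set.Ioo (0 : ℝ) 1 →
      1 - δ ≤ ((Measure.pi fun _ : Fin m => μ)
        {S : Fin m → X | sdMinus f μ S ≤ EZ +
          Real.sqrt (((b - a) * Real.log (1 / δ) / (3 * m)) ^ 2 +
            2 * (b - a) * Real.log (1 / δ) * (EZ + gammaF f μ b) / m) +
          (b - a) * Real.log (1 / δ) / (3 * m)}).toReal := by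
  refine ⟨fun ε hε => measureReal_sdMinus_ge_le hab hm hmeas hrange hEZ hε, fun δ hδ => ?_⟩
  have hc : 0 < b - a := sub_pos.2 hab
  have hm' : (0 : ℝ) < m := by exact_mod_cast hm
  have hw : 0 ≤ EZ + gammaF f μ b := hEZ ▸ integral_sdMinus_add_gammaF_nonneg hab hm hmeas hrange
  have htail := measureReal_sdMinus_ge_le hab hm hmeas hrange hEZ
    (bernsteinRadius_pos (w := EZ + gammaF f μ b) hc hm' hδ)
  rw [exp_neg_bernsteinRadius hc hw hm' hδ] at htail
  simpa only [bernsteinRadius, ← add_assoc] using!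
    one_sub_le_measureReal_le_of_measureReal_ge_le htail

theorem stmt_16 {X : Type*} [MeasurableSpace X] {ι : Type*} [Countable ι]
    (f : ι → X → ℝ) (a b : ℝ) (ha : a ≤ 0) (hb : 0 < b)
    (hmeas : ∀ l : ι, Measurable (f l))
    (hrange : ∀ (l : ι) (x : X), f l x ∈ Set.Icc a b)
    (hzero : ∃ l₀ : ι, ∀ x : X, f l₀ x = 0)
    (μ : Measure X) [IsProbabilityMeasure μ] (m : ℕ) (hm : 0 < m)
    (EZ : ℝ) (hEZ : EZ = ∫ S : Fin m → X, sdMinus f μ S ∂(Measure.pi fun _ : Fin m => μ)) :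
    (∀ ε : ℝ, 0 < ε →
      ((Measure.pi fun _ : Fin m => μ)
          {S : Fin m → X | sdMinus f μ S ≥ EZ + ε}).toReal ≤
        Real.exp (-((m : ℝ) * ε ^ 2) / (2 * (b - a) * (EZ + gammaF f μ b + ε / 3)))) ∧
    ∀ δ : ℝ, δ ∈ Set.Ioo (0 : ℝ) 1 →
      1 - δ ≤ ((Measure.pi fun _ : Fin m => μ)
        {S : Fin m → X | sdMinus f μ S ≤ EZ +
          Real.sqrt (((b - a) * Real.log (1 / δ) / (3 * m)) ^ 2 +
            2 * (b - a) * Real.log (1 / δ) * (EZ + gammaF f μ b) / m) +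
          (b - a) * Real.log (1 / δ) / (3 * m)}).toReal := by
  obtain ⟨l₀, -⟩ := hzero
  have : Nonempty ι := ⟨l₀⟩
  exact stmt_16_general f a b (ha.trans_lt hb) hmeas hrange μ m hm EZ hEZ
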